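/- Let 1 ≤ p < ∞ and w ∈ 𝒲. Let (E_n)_{n=1}^∞ be any sequence of finite-dimensional real normed spaces and let E = (⊕_{n=1}^∞ E_n)_{ℓ_p}. Then there do not exist a constant C ≥ 1 and a sequence (z_i)_{i=1}^∞ in E such that for every finitely supported real sequence (a_i): C^{-1}·‖a‖_{g(w,p)} ≤ ‖∑_{i=1}^∞ a_i z_i‖_E ≤ C·‖a‖_{g(w,p)}. In particular, the Garling sequence space g(w,p) does not embed isomorphically into any ℓ_p-sum of finite-dimensional spaces. -/

import Mathlib

/-- The Garling norm `‖a‖_{g(w,p)} = sup (∑_k |a_{n_k}|^p w_k)^{1/p}` of a real sequence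
`a`, the supremum taken over all strictly increasing sequences `n_1 < n_2 < ⋯` of indices
(strictly monotone maps `f : ℕ → ℕ`; everything `0`-indexed). -/
noncomputable def garlingNorm (w : ℕ → ℝ) (p : ℝ) (a : ℕ → ℝ) : ℝ :=
  ⨆ f : {f : ℕ → ℕ // StrictMono f}, (∑' k : ℕ, |a (f.1 k)| ^ p * w k) ^ (1 / p)

/-!
In an `ℓ_q`-sum of finite-dimensional spaces a bounded separated sequence has differences that
nearly vanish on any prescribed finite set of coordinates. Adding such a difference to a given
vector increases the `q`-th power of its norm by almost `δ ^ q`, where `δ` is the separation. Hence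
some combination of `2 N` terms with coefficients `±1` has norm at least a constant times
`N ^ (1 / q)`. The same combination of unit vectors has Garling norm at most
`(w_1 + ⋯ + w_{2N}) ^ (1 / p)`, which is `o(N ^ (1 / p))` because `w` is null. The two are
incompatible as soon as `q ≤ p`.
-/

open Filter Topology Finset Asymptotics

section NullWeights

lemma sum_le_sum_range_card_of_antitone {M : Type*} [AddCommMonoid M] [PartialOrder M]
    [IsOrderedAddMonoid M] {f : ℕ → M} (hf : Antitone f) (s : Finset ℕ) :
    ∑ k ∈ s, f k ≤ ∑ k ∈ range #s, f k := by
  induction s using Finset.induction_on_max with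
  | empty => simp
  | insert m s hm ih =>
    have hms : m ∉ s := fun h => lt_irrefl _ (hm m h)
    have hcard : #s ≤ m := by
      simpa using card_le_card fun x hx => mem_range.2 (hm x hx)
    rw [sum_insert hms, card_insert_of_notMem hms, sum_range_succ, add_comm]
    exact add_le_add ih (hf hcard)

lemma isLittleO_rpow_sum_range {w : ℕ → ℝ} (hw : Tendsto w atTop (𝓝 0)) {t : ℝ} (ht : 0 < t)
    (ht1 : t ≤ 1) :
    (fun n => (∑ k ∈ range n, w k) ^ t) =o[atTop] fun n : ℕ => (n : ℝ) := by
  have hid : 0 ≤ᶠ[atTop] fun n : ℕ => (n : ℝ) := Eventually.of_forall fun n => Nat.cast_nonneg n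
  refine ((isLittleO_sum_range_of_tendsto_zero hw).rpow ht hid).trans_isBigO (.of_bound' ?_)
  filter_upwards [eventually_ge_atTop 1] with n hn
  rw [Real.norm_of_nonneg (by positivity), Real.norm_of_nonneg (by positivity)]
  exact Real.rpow_le_self_of_one_le (mod_cast hn) ht1

lemma isLittleO_mul_rpow_sum_range_rpow {w : ℕ → ℝ} (hw_nonneg : ∀ i, 0 ≤ w i)
    (hw : Tendsto w atTop (𝓝 0)) {C : ℝ} (hC : 0 ≤ C) {p r : ℝ} (hr : 0 < r) (hrp : r ≤ p) :
    (fun n => (C * (∑ k ∈ range n, w k) ^ (1 / p)) ^ r) =o[atTop] fun n : ℕ => (n : ℝ) := by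
  have hp : 0 < p := hr.trans_le hrp
  have hexp : (fun n => (C * (∑ k ∈ range n, w k) ^ (1 / p)) ^ r) =
      fun n => C ^ r * (∑ k ∈ range n, w k) ^ (1 / p * r) := by
    funext n
    have hsum : 0 ≤ ∑ k ∈ range n, w k := sum_nonneg fun k _ => hw_nonneg k
    rw [Real.mul_rpow hC (by positivity), ← Real.rpow_mul hsum]
  rw [hexp]
  refine (isLittleO_rpow_sum_range hw (by positivity) ?_).const_mul_left _
  rwa [one_div_mul_eq_div, div_le_one hp]

lemma exists_add_self_lt_mul_of_isLittleO {f : ℕ → ℝ}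
    (hf : f =o[atTop] fun n : ℕ => (n : ℝ)) {c : ℝ} (hc : 0 < c) :
    ∃ n : ℕ, f (n + n) < n * c := by
  obtain ⟨m, hm⟩ := eventually_atTop.1 (hf.bound (by positivity : 0 < c / 4))
  refine ⟨m + 1, ?_⟩
  calc f (m + 1 + (m + 1)) ≤ c / 4 * ‖((m + 1 + (m + 1) : ℕ) : ℝ)‖ :=
        (le_abs_self _).trans (hm _ (by omega))
    _ = (m + 1 : ℕ) * c / 2 := by
        rw [Real.norm_natCast]
        push_cast
        ring
    _ < (m + 1 : ℕ) * c := half_lt_self (by positivity)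

end NullWeights

section Garling

variable {w : ℕ → ℝ} {p : ℝ}

/-- The difference of the indicator sequences of the finite sets `A` and `B`, as a finitely
supported sequence. It serves as the coefficient sequence of `∑ i ∈ A, z i - ∑ i ∈ B, z i`; the
sets are not assumed disjoint. -/
noncomputable def signIndicator (A B : Finset ℕ) : ℕ →₀ ℝ :=
  ∑ i ∈ A, Finsupp.single i 1 - ∑ i ∈ B, Finsupp.single i 1

lemma signIndicator_apply (A B : Finset ℕ) (k : ℕ) :
    signIndicator A B k = (if k ∈ A then 1 else 0) - (if k ∈ B then 1 else 0) := by
  simp [signIndicator, Finsupp.single_apply]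

lemma abs_signIndicator_le_one (A B : Finset ℕ) (k : ℕ) : |signIndicator A B k| ≤ 1 := by
  rw [signIndicator_apply]
  split_ifs <;> simp

lemma card_support_signIndicator_le (A B : Finset ℕ) :
    #(signIndicator A B).support ≤ #A + #B := by
  refine (card_le_card fun k hk => ?_).trans (card_union_le A B)
  by_contra hkAB
  rw [mem_union, not_or] at hkAB
  simp [signIndicator_apply, hkAB] at hk

lemma linearCombination_signIndicator {X : Type*} [AddCommGroup X] [Module ℝ X] (z : ℕ → X)
    (A B : Finset ℕ) :
    Finsupp.linearCombination ℝ z (signIndicator A B) = ∑ i ∈ A, z i - ∑ i ∈ B, z i := by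
  simp [signIndicator]

lemma hasSum_garling_comp (hp : 0 < p) (a : ℕ →₀ ℝ) {f : ℕ → ℕ} (hf : f.Injective) :
    HasSum (fun k => |a (f k)| ^ p * w k)
      (∑ k ∈ a.support.preimage f hf.injOn, |a (f k)| ^ p * w k) := by
  refine hasSum_sum_of_ne_finset_zero fun k hk => ?_
  have hak : a (f k) = 0 := by simpa using hk
  simp [hak, Real.zero_rpow hp.ne']

lemma tsum_garling_comp_le (hp : 0 < p) (hw_nonneg : ∀ i, 0 ≤ w i) (hw : Antitone w)
    {a : ℕ →₀ ℝ} {M : ℝ} (ha : ∀ i, |a i| ≤ M) {f : ℕ → ℕ} (hf : f.Injective) :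
    ∑' k, |a (f k)| ^ p * w k ≤ M ^ p * ∑ k ∈ range #a.support, w k := by
  have hM : 0 ≤ M := (abs_nonneg _).trans (ha 0)
  have hcard : #(a.support.preimage f hf.injOn) ≤ #a.support :=
    card_le_card_of_injOn f (fun k hk => mem_preimage.1 hk) hf.injOn
  calc ∑' k, |a (f k)| ^ p * w k
      = ∑ k ∈ a.support.preimage f hf.injOn, |a (f k)| ^ p * w k :=
        (hasSum_garling_comp hp a hf).tsum_eq
    _ ≤ ∑ k ∈ a.support.preimage f hf.injOn, M ^ p * w k := by
        gcongr with k
        · exact hw_nonneg k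
        · exact ha _
    _ = M ^ p * ∑ k ∈ a.support.preimage f hf.injOn, w k := (mul_sum _ _ _).symm
    _ ≤ M ^ p * ∑ k ∈ range #a.support, w k := by
        refine mul_le_mul_of_nonneg_left ?_ (by positivity)
        exact (sum_le_sum_range_card_of_antitone hw _).trans
          (sum_le_sum_of_subset_of_nonneg (range_mono hcard) fun k _ _ => hw_nonneg k)

lemma garling_term_le (hp : 0 < p) (hw_nonneg : ∀ i, 0 ≤ w i) (hw : Antitone w)
    {a : ℕ →₀ ℝ} {M : ℝ} (ha : ∀ i, |a i| ≤ M) {f : ℕ → ℕ} (hf : f.Injective) :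
    (∑' k, |a (f k)| ^ p * w k) ^ (1 / p) ≤
      M * (∑ k ∈ range #a.support, w k) ^ (1 / p) := by
  have hM : 0 ≤ M := (abs_nonneg _).trans (ha 0)
  have hterm : ∀ k, 0 ≤ |a (f k)| ^ p * w k := fun k => mul_nonneg (by positivity) (hw_nonneg k)
  have hsum : 0 ≤ ∑ k ∈ range #a.support, w k := sum_nonneg fun k _ => hw_nonneg k
  calc (∑' k, |a (f k)| ^ p * w k) ^ (1 / p)
      ≤ (M ^ p * ∑ k ∈ range #a.support, w k) ^ (1 / p) := by
        gcongr
        · exact tsum_nonneg hterm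
        · exact tsum_garling_comp_le hp hw_nonneg hw ha hf
    _ = M * (∑ k ∈ range #a.support, w k) ^ (1 / p) := by
        rw [Real.mul_rpow (by positivity) hsum, one_div, Real.rpow_rpow_inv hM hp.ne']

lemma garlingNorm_le (hp : 0 < p) (hw_nonneg : ∀ i, 0 ≤ w i) (hw : Antitone w)
    {a : ℕ →₀ ℝ} {M : ℝ} (ha : ∀ i, |a i| ≤ M) :
    garlingNorm w p a ≤ M * (∑ k ∈ range #a.support, w k) ^ (1 / p) := by
  have : Nonempty {f : ℕ → ℕ // StrictMono f} := ⟨⟨id, strictMono_id⟩⟩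
  exact ciSup_le fun f => garling_term_le hp hw_nonneg hw ha f.2.injective

lemma bddAbove_range_garling_term (hp : 0 < p) (hw_nonneg : ∀ i, 0 ≤ w i) (hw : Antitone w)
    (a : ℕ →₀ ℝ) :
    BddAbove (Set.range fun f : {f : ℕ → ℕ // StrictMono f} =>
      (∑' k, |a (f.1 k)| ^ p * w k) ^ (1 / p)) := by
  have ha : ∀ i, |a i| ≤ ∑ j ∈ a.support, |a j| := fun i => by
    by_cases hi : i ∈ a.support
    · exact single_le_sum (f := fun j => |a j|) (fun j _ => abs_nonneg _) hi
    · rw [Finsupp.notMem_support_iff.1 hi, abs_zero]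
      positivity
  exact ⟨_, Set.forall_mem_range.2 fun f => garling_term_le hp hw_nonneg hw ha f.2.injective⟩

lemma abs_mul_rpow_le_garlingNorm (hp : 0 < p) (hw_nonneg : ∀ i, 0 ≤ w i) (hw : Antitone w)
    (a : ℕ →₀ ℝ) (i : ℕ) : |a i| * w 0 ^ (1 / p) ≤ garlingNorm w p a := by
  have hf : StrictMono fun k : ℕ => i + k := fun _ _ h => Nat.add_lt_add_left h i
  have hfirst : |a i| ^ p * w 0 ≤ ∑' k, |a (i + k)| ^ p * w k :=
    (hasSum_garling_comp hp a hf.injective).summable.le_tsum 0 fun k _ =>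
      mul_nonneg (by positivity) (hw_nonneg k)
  calc |a i| * w 0 ^ (1 / p) = (|a i| ^ p * w 0) ^ (1 / p) := by
        rw [Real.mul_rpow (by positivity) (hw_nonneg 0), one_div,
          Real.rpow_rpow_inv (abs_nonneg _) hp.ne']
    _ ≤ (∑' k, |a (i + k)| ^ p * w k) ^ (1 / p) :=
        Real.rpow_le_rpow (mul_nonneg (by positivity) (hw_nonneg 0)) hfirst (by positivity)
    _ ≤ garlingNorm w p a :=
        le_ciSup (bddAbove_range_garling_term hp hw_nonneg hw a) ⟨fun k => i + k, hf⟩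

lemma garlingNorm_signIndicator_le (hp : 0 < p) (hw_nonneg : ∀ i, 0 ≤ w i) (hw : Antitone w)
    (A B : Finset ℕ) :
    garlingNorm w p (signIndicator A B) ≤ (∑ k ∈ range (#A + #B), w k) ^ (1 / p) := by
  refine (garlingNorm_le hp hw_nonneg hw (abs_signIndicator_le_one A B)).trans ?_
  rw [one_mul]
  gcongr
  · exact sum_nonneg fun k _ => hw_nonneg k
  · exact fun k _ _ => hw_nonneg k
  · exact card_support_signIndicator_le A B

variable {X : Type*} [NormedAddCommGroup X] [NormedSpace ℝ X] {z : ℕ → X}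

lemma norm_sum_sub_sum_le_of_le_garlingNorm (hp : 0 < p) (hw_nonneg : ∀ i, 0 ≤ w i)
    (hw : Antitone w) {C : ℝ} (hC : 0 ≤ C)
    (hz : ∀ a : ℕ →₀ ℝ, ‖Finsupp.linearCombination ℝ z a‖ ≤ C * garlingNorm w p a)
    (A B : Finset ℕ) :
    ‖∑ i ∈ A, z i - ∑ i ∈ B, z i‖ ≤ C * (∑ k ∈ range (#A + #B), w k) ^ (1 / p) := by
  rw [← linearCombination_signIndicator]
  exact (hz _).trans (by gcongr; exact garlingNorm_signIndicator_le hp hw_nonneg hw A B)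

lemma isBounded_range_of_le_garlingNorm (hp : 0 < p) (hw_nonneg : ∀ i, 0 ≤ w i)
    (hw : Antitone w) {C : ℝ} (hC : 0 ≤ C)
    (hz : ∀ a : ℕ →₀ ℝ, ‖Finsupp.linearCombination ℝ z a‖ ≤ C * garlingNorm w p a) :
    Bornology.IsBounded (Set.range z) := by
  refine isBounded_iff_forall_norm_le.2 ⟨C * w 0 ^ (1 / p), Set.forall_mem_range.2 fun i => ?_⟩
  simpa using norm_sum_sub_sum_le_of_le_garlingNorm hp hw_nonneg hw hC hz {i} ∅

lemma pairwise_le_norm_sub_of_garlingNorm_le (hp : 0 < p) (hw_nonneg : ∀ i, 0 ≤ w i)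
    (hw : Antitone w) {c : ℝ} (hc : 0 ≤ c)
    (hz : ∀ a : ℕ →₀ ℝ, c * garlingNorm w p a ≤ ‖Finsupp.linearCombination ℝ z a‖) :
    Pairwise fun i j => c * w 0 ^ (1 / p) ≤ ‖z i - z j‖ := by
  intro i j hij
  calc c * w 0 ^ (1 / p) = c * (|signIndicator {i} {j} i| * w 0 ^ (1 / p)) := by
        simp [signIndicator_apply, hij]
    _ ≤ c * garlingNorm w p (signIndicator {i} {j}) := by
        gcongr
        exact abs_mul_rpow_le_garlingNorm hp hw_nonneg hw _ i
    _ ≤ ‖z i - z j‖ := by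
        simpa only [linearCombination_signIndicator, sum_singleton] using
          hz (signIndicator {i} {j})

end Garling

section GlidingHump

variable {ι : Type*} {q : ENNReal} {E : ι → Type*} [∀ n, NormedAddCommGroup (E n)]

section Truncation

variable [DecidableEq ι]

/-- The projection of an `ℓ_q`-sum onto the coordinates in a finite set `F`, as an additive
endomorphism of the whole sum. -/
noncomputable def truncation (F : Finset ι) : lp E q →+ lp E q :=
  ∑ n ∈ F, (lp.singleAddMonoidHom q n).comp
    ((Pi.evalAddMonoidHom E n).comp (lp.coeFnAddMonoidHom E q))

lemma truncation_apply (F : Finset ι) (x : lp E q) :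
    truncation F x = ∑ n ∈ F, lp.single q n (x n) := by
  simp only [truncation, AddMonoidHom.finsetSum_apply]
  rfl

lemma norm_rpow_eq_truncation_add_compl (hq : 0 < q.toReal) (F : Finset ι) (x : lp E q) :
    ‖x‖ ^ q.toReal =
      ‖truncation F x‖ ^ q.toReal + ‖x - truncation F x‖ ^ q.toReal := by
  rw [truncation_apply, lp.norm_sum_single hq, ← lp.norm_sub_norm_compl_sub_single hq x F,
    sub_add_cancel]

variable [Fact (1 ≤ q)]

lemma max_rpow_add_max_rpow_le_norm_add_rpow (hq : 0 < q.toReal) {F : Finset ι} {x y : lp E q}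
    {ε : ℝ} (hx : ‖x - truncation F x‖ ≤ ε) (hy : ‖truncation F y‖ ≤ ε) :
    max 0 (‖x‖ - 2 * ε) ^ q.toReal + max 0 (‖y‖ - 2 * ε) ^ q.toReal ≤ ‖x + y‖ ^ q.toReal := by
  -- `x` dominates the coordinates in `F`, and `y` those outside `F`
  rw [norm_rpow_eq_truncation_add_compl hq F (x + y), map_add, add_sub_add_comm]
  gcongr
  · refine max_le (norm_nonneg _) ?_
    linarith [norm_sub_norm_le x (truncation F x),
      norm_sub_le_norm_add (truncation F x) (truncation F y)]
  · refine max_le (norm_nonneg _) ?_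
    have := norm_sub_le_norm_add (y - truncation F y) (x - truncation F x)
    rw [add_comm] at this
    linarith [norm_sub_norm_le y (truncation F y)]

lemma exists_truncation_norm_add_rpow_ge (hq : q ≠ ⊤) (x : lp E q) {δ c : ℝ} (hδ : 0 ≤ δ)
    (hc : c < δ ^ q.toReal) :
    ∃ F : Finset ι, ∃ ε > 0, ∀ y : lp E q, δ ≤ ‖y‖ → ‖truncation F y‖ ≤ ε →
      ‖x‖ ^ q.toReal + c ≤ ‖x + y‖ ^ q.toReal := by
  have hr : 0 < q.toReal := ENNReal.toReal_pos (zero_lt_one.trans_le Fact.out).ne' hq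
  let g : ℝ → ℝ := fun ε =>
    max 0 (‖x‖ - 2 * ε) ^ q.toReal + max 0 (δ - 2 * ε) ^ q.toReal
  have hg : Continuous g := by fun_prop (disch := exact hr.le)
  have hg0 : ‖x‖ ^ q.toReal + c < g 0 := by simpa [g, hδ] using hc
  have hg_gt : ∀ᶠ ε in 𝓝[>] 0, ‖x‖ ^ q.toReal + c < g ε :=
    (hg.tendsto 0).mono_left nhdsWithin_le_nhds |>.eventually_const_lt hg0
  obtain ⟨ε, hgε, hε⟩ := (hg_gt.and self_mem_nhdsWithin).exists
  obtain ⟨F, hF⟩ := ((lp.hasSum_single hq x).eventually (Metric.closedBall_mem_nhds x hε)).exists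
  refine ⟨F, ε, hε, fun y hδy hy => ?_⟩
  have hx : ‖x - truncation F x‖ ≤ ε := by
    rwa [truncation_apply, ← dist_eq_norm, dist_comm]
  calc ‖x‖ ^ q.toReal + c ≤ g ε := hgε.le
    _ ≤ max 0 (‖x‖ - 2 * ε) ^ q.toReal + max 0 (‖y‖ - 2 * ε) ^ q.toReal := by
        dsimp only [g]
        gcongr
    _ ≤ ‖x + y‖ ^ q.toReal := max_rpow_add_max_rpow_le_norm_add_rpow hr hx hy

variable [∀ n, ProperSpace (E n)] {z : ℕ → lp E q}

lemma exists_tendsto_subseq_truncation (hz : Bornology.IsBounded (Set.range z)) (F : Finset ι) :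
    ∃ l, ∃ φ : ℕ → ℕ, StrictMono φ ∧ Tendsto (fun k => truncation F (z (φ k))) atTop (𝓝 l) := by
  obtain ⟨B, hB⟩ := isBounded_iff_forall_norm_le.1 hz
  let coords : ℕ → ∀ n : F, E n := fun i n => z i n
  have hcoords : ∀ i, coords i ∈ Metric.closedBall 0 B := fun i => by
    have hi := hB _ (Set.mem_range_self i)
    rw [mem_closedBall_zero_iff, pi_norm_le_iff_of_nonneg ((norm_nonneg _).trans hi)]
    exact fun n =>
      (lp.norm_apply_le_norm (zero_lt_one.trans_le Fact.out).ne' (z i) n).trans hi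
  obtain ⟨l, -, φ, hφ, hl⟩ := tendsto_subseq_of_bounded Metric.isBounded_closedBall hcoords
  refine ⟨∑ n : F, lp.single q n (l n), φ, hφ, ?_⟩
  simp only [truncation_apply, ← sum_coe_sort F]
  exact tendsto_finsetSum _ fun n _ =>
    ((lp.isometry_single n.1).continuous.tendsto _).comp (tendsto_pi_nhds.1 hl n)

lemma exists_lt_norm_truncation_sub_le (hz : Bornology.IsBounded (Set.range z)) (F : Finset ι)
    (m : ℕ) {ε : ℝ} (hε : 0 < ε) :
    ∃ i j, m ≤ i ∧ i < j ∧ ‖truncation F (z j - z i)‖ ≤ ε := by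
  obtain ⟨l, φ, hφ, hl⟩ := exists_tendsto_subseq_truncation hz F
  obtain ⟨K, hK⟩ := Metric.cauchySeq_iff.1 hl.cauchySeq ε hε
  refine ⟨φ (max m K), φ (max m K + 1), (le_max_left m K).trans hφ.le_apply,
    hφ (Nat.lt_succ_self _), ?_⟩
  rw [map_sub, ← dist_eq_norm]
  exact (hK _ (by omega) _ (by omega)).le

end Truncation

lemma exists_norm_sum_sub_sum_rpow_ge [Fact (1 ≤ q)] [∀ n, ProperSpace (E n)] {z : ℕ → lp E q}
    (hq : q ≠ ⊤) (hz : Bornology.IsBounded (Set.range z)) {δ c : ℝ} (hδ : 0 ≤ δ)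
    (hsep : Pairwise fun i j => δ ≤ ‖z i - z j‖) (hc : c < δ ^ q.toReal) (N : ℕ) :
    ∃ A B : Finset ℕ, #A = N ∧ #B = N ∧
      N * c ≤ ‖∑ i ∈ A, z i - ∑ i ∈ B, z i‖ ^ q.toReal := by
  classical
  induction N with
  | zero => exact ⟨∅, ∅, rfl, rfl, by simp [Real.rpow_nonneg]⟩
  | succ N ih =>
    obtain ⟨A, B, hA, hB, hAB⟩ := ih
    obtain ⟨F, ε, hε, hgain⟩ :=
      exists_truncation_norm_add_rpow_ge hq (∑ i ∈ A, z i - ∑ i ∈ B, z i) hδ hc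
    obtain ⟨m, hm⟩ := (A ∪ B).exists_nat_subset_range
    obtain ⟨i, j, hmi, hij, hF⟩ := exists_lt_norm_truncation_sub_le hz F m hε
    have hjA : j ∉ A := fun h => by
      have := mem_range.1 (hm (mem_union_left B h))
      omega
    have hiB : i ∉ B := fun h => by
      have := mem_range.1 (hm (mem_union_right A h))
      omega
    refine ⟨insert j A, insert i B, by rw [card_insert_of_notMem hjA, hA],
      by rw [card_insert_of_notMem hiB, hB], ?_⟩
    rw [sum_insert hjA, sum_insert hiB, add_sub_add_comm, add_comm (z j - z i)]
    push_cast
    linarith [hgain _ (hsep hij.ne') hF]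

end GlidingHump

lemma tsum_smul_eq_linearCombination {κ R X : Type*} [Semiring R] [AddCommMonoid X]
    [TopologicalSpace X] [Module R X] (z : κ → X) (a : κ →₀ R) :
    ∑' i, a i • z i = Finsupp.linearCombination R z a := by
  rw [Finsupp.linearCombination_apply]
  exact tsum_eq_sum fun i hi => by rw [Finsupp.notMem_support_iff.1 hi, zero_smul]

theorem stmt_13_general {ι : Type*} {p : ℝ} {q : ENNReal} [Fact (1 ≤ q)]
    (hqp : q ≤ ENNReal.ofReal p) {w : ℕ → ℝ} (hw_zero : 0 < w 0) (hw_anti : Antitone w)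
    (hw_null : Tendsto w atTop (𝓝 0)) (E : ι → Type*) [∀ n, NormedAddCommGroup (E n)]
    [∀ n, NormedSpace ℝ (E n)] [∀ n, FiniteDimensional ℝ (E n)] :
    ¬ ∃ (C : ℝ) (z : ℕ → lp E q), 0 < C ∧ ∀ a : ℕ →₀ ℝ,
      C⁻¹ * garlingNorm w p a ≤ ‖Finsupp.linearCombination ℝ z a‖ ∧
      ‖Finsupp.linearCombination ℝ z a‖ ≤ C * garlingNorm w p a := by
  classical
  rintro ⟨C, z, hC, hz⟩
  have hw_nonneg : ∀ i, 0 ≤ w i := hw_anti.le_of_tendsto hw_null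
  have hq_top : q ≠ ⊤ := ne_top_of_le_ne_top ENNReal.ofReal_ne_top hqp
  have hq : 0 < q.toReal := ENNReal.toReal_pos (zero_lt_one.trans_le Fact.out).ne' hq_top
  have hp : 0 < p := ENNReal.ofReal_pos.1 ((zero_lt_one.trans_le Fact.out).trans_le hqp)
  have hqp' : q.toReal ≤ p := ENNReal.toReal_le_of_le_ofReal hp.le hqp
  set δ := C⁻¹ * w 0 ^ (1 / p)
  have hδ : 0 < δ := by positivity
  have hδq : 0 < δ ^ q.toReal := by positivity
  have hbdd := isBounded_range_of_le_garlingNorm hp hw_nonneg hw_anti hC.le fun a => (hz a).2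
  have hsep := pairwise_le_norm_sub_of_garlingNorm_le hp hw_nonneg hw_anti
    (inv_pos.2 hC).le fun a => (hz a).1
  obtain ⟨N, hN⟩ := exists_add_self_lt_mul_of_isLittleO
    (isLittleO_mul_rpow_sum_range_rpow hw_nonneg hw_null hC.le hq hqp') (half_pos hδq)
  obtain ⟨A, B, rfl, hB, hlower⟩ :=
    exists_norm_sum_sub_sum_rpow_ge hq_top hbdd hδ.le hsep (half_lt_self hδq) N
  refine (hlower.trans ?_).not_gt hN
  gcongr
  simpa only [hB] using
    norm_sum_sub_sum_le_of_le_garlingNorm hp hw_nonneg hw_anti hC.le (fun a => (hz a).2) A B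

/-- Let `1 ≤ p < ∞` and `w ∈ 𝒲` (a positive, nonincreasing null weight
with `w_1 = 1`, not summable; `0`-indexed below).  Let `(E_n)` be any sequence of
finite-dimensional real normed spaces and `E = (⊕_n E_n)_{ℓ_p}`.  Then there do not exist
`C ≥ 1` and a sequence `(z_i)` in `E` such that for every finitely supported real
sequence `(a_i)`:
`C⁻¹ ‖a‖_{g(w,p)} ≤ ‖∑_i a_i z_i‖_E ≤ C ‖a‖_{g(w,p)}`.
In particular, the Garling sequence space `g(w,p)` does not embed isomorphically into any
`ℓ_p`-sum of finite-dimensional spaces. -/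
theorem stmt_13 (p : ℝ) (hp : 1 ≤ p) [Fact (1 ≤ ENNReal.ofReal p)]
    (w : ℕ → ℝ) (hw_pos : ∀ i, 0 < w i) (hw_one : w 0 = 1) (hw_anti : Antitone w)
    (hw_null : Filter.Tendsto w Filter.atTop (nhds 0)) (hw_nonsum : ¬ Summable w)
    (E : ℕ → Type*) [∀ n, NormedAddCommGroup (E n)] [∀ n, NormedSpace ℝ (E n)]
    [∀ n, FiniteDimensional ℝ (E n)] :
    ¬ ∃ (C : ℝ) (z : ℕ → lp E (ENNReal.ofReal p)), 1 ≤ C ∧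
      ∀ a : ℕ → ℝ, (Function.support a).Finite →
        C⁻¹ * garlingNorm w p a ≤ ‖∑' i : ℕ, a i • z i‖ ∧
        ‖∑' i : ℕ, a i • z i‖ ≤ C * garlingNorm w p a := by
  rintro ⟨C, z, hC, hz⟩
  refine stmt_13_general le_rfl (hw_pos 0) hw_anti hw_null E ⟨C, z, by linarith, fun a => ?_⟩
  simpa only [tsum_smul_eq_linearCombination] using hz a a.hasFiniteSupport
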